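/- arXiv:1403.5509 — 2 statements merged into one kernel-verified Lean document; each statement's English description precedes it below -/
import Mathlib

section
/- Let U be a complex vector space, n ∈ ℕ, 0 ≤ k ≤ n−1, and J = {j_1 < j_2 < ⋯ < j_k} ⊆ {1,…,n}; let f_J ∈ Inj_k^n be the map i ↦ j_i. Let u, v_{j_1}, …, v_{j_k} ∈ U. Then in U^{⊗(k+1)} ⊗ ℂ[Inj_{k+1}^n]: e_{S_{k+1}}( Σ_{l=1}^{k+1} Σ_{g ∈ Inj_{k+1}^n, g strictly increasing, g∘ι_l = f_J} u^{(l)}(v_{j_1}⊗⋯⊗v_{j_k}) ⊗ g ) = (1/(k+1)!) Σ_{l=1}^{k+1} Σ_{σ ∈ S_k} (u^{(l)} ∘ P_σ)(v_{j_1}⊗⋯⊗v_{j_k}) ⊗ (res_l^*)(f_J ∘ σ⁻¹). -/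
open scoped TensorProduct

noncomputable section

/-- The permutation action `P_τ` of `τ ∈ S_k` on `U^{⊗k}`:
`w₁ ⊗ ⋯ ⊗ w_k ↦ w_{τ⁻¹(1)} ⊗ ⋯ ⊗ w_{τ⁻¹(k)}`. -/
def permTP (U : Type) [AddCommGroup U] [Module ℂ U] (k : ℕ) (τ : Equiv.Perm (Fin k)) :
    (⨂[ℂ] _ : Fin k, U) →ₗ[ℂ] ⨂[ℂ] _ : Fin k, U :=
  (PiTensorProduct.reindex ℂ (fun _ : Fin k => U) τ).toLinearMap

/-- `ℂ[Inj_k^n]`: the free complex vector space on the set of injective maps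
`{1,…,k} → {1,…,n}`. -/
abbrev InjSp (k n : ℕ) : Type := (Fin k ↪ Fin n) →₀ ℂ

/-- The action of `τ ∈ S_k` on `ℂ[Inj_k^n]` by `f ↦ f ∘ τ⁻¹` on basis elements. -/
def kActInj (k n : ℕ) (τ : Equiv.Perm (Fin k)) : InjSp k n →ₗ[ℂ] InjSp k n :=
  Finsupp.lmapDomain ℂ ℂ (fun f : Fin k ↪ Fin n => (τ⁻¹ : Equiv.Perm (Fin k)).toEmbedding.trans f)

/-- The diagonal action of `τ ∈ S_k` on `U^{⊗k} ⊗ ℂ[Inj_k^n]`: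
`τ · ((w₁⊗⋯⊗w_k) ⊗ f) = (w_{τ⁻¹(1)}⊗⋯⊗w_{τ⁻¹(k)}) ⊗ (f ∘ τ⁻¹)`. -/
def diagAct (U : Type) [AddCommGroup U] [Module ℂ U] (k n : ℕ) (τ : Equiv.Perm (Fin k)) :
    (⨂[ℂ] _ : Fin k, U) ⊗[ℂ] InjSp k n →ₗ[ℂ] (⨂[ℂ] _ : Fin k, U) ⊗[ℂ] InjSp k n :=
  TensorProduct.map (permTP U k τ) (kActInj k n τ)

/-- `res_l^* : ℂ[Inj_k^n] → ℂ[Inj_{k+1}^n]`, defined on basis elements by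
`f ↦ Σ_{g : g ∘ ι_l = f} g`. -/
def resStar (n k : ℕ) (l : Fin (k + 1)) : InjSp k n →ₗ[ℂ] InjSp (k + 1) n :=
  letI : DecidableEq (Fin k ↪ Fin n) := Classical.decEq _
  Finsupp.lsum ℂ fun f : Fin k ↪ Fin n =>
    LinearMap.toSpanSingleton ℂ (InjSp (k + 1) n)
      (∑ g : Fin (k + 1) ↪ Fin n with (Fin.succAboveEmb l).trans g = f, Finsupp.single g 1)

/-- The permutation of `Fin k` obtained from `τ` by deleting `l` from the source and `τ l` from
the target. -/
def permDelete {k : ℕ} (τ : Equiv.Perm (Fin (k + 1))) (l : Fin (k + 1)) : Equiv.Perm (Fin k) :=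
  (finSuccAboveEquiv l).trans
    ((τ.subtypeEquiv (q := (· ≠ τ l)) fun _ => τ.injective.ne_iff.symm).trans
      (finSuccAboveEquiv (τ l)).symm)

lemma succAbove_permDelete {k : ℕ} (τ : Equiv.Perm (Fin (k + 1))) (l : Fin (k + 1)) (i : Fin k) :
    (τ l).succAbove (permDelete τ l i) = τ (l.succAbove i) :=
  congrArg Subtype.val ((finSuccAboveEquiv (τ l)).apply_symm_apply
    ⟨τ (l.succAbove i), τ.injective.ne (l.succAbove_ne i)⟩)

lemma insertNth_permDelete {k : ℕ} {α : Type*} (τ : Equiv.Perm (Fin (k + 1))) (l : Fin (k + 1))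
    (a : α) (v : Fin k → α) (j : Fin (k + 1)) :
    (τ l).insertNth (α := fun _ => α) a (fun i => v ((permDelete τ l)⁻¹ i)) j =
      l.insertNth (α := fun _ => α) a v (τ⁻¹ j) := by
  obtain ⟨j, rfl⟩ := τ.surjective j
  obtain rfl | ⟨i, rfl⟩ := l.eq_self_or_eq_succAbove j
  · simp
  · rw [← succAbove_permDelete, Fin.insertNth_apply_succAbove, succAbove_permDelete]
    simp

/-- A strictly increasing map on `Fin k` stays strictly increasing under no nontrivial
rearrangement. -/
lemma perm_eq_one_of_strictMono_comp {k : ℕ} {α : Type*} [LinearOrder α] {f : Fin k → α}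
    (hf : StrictMono f) {ρ : Equiv.Perm (Fin k)} (hρ : StrictMono (f ∘ ρ)) : ρ = 1 := by
  have h : StrictMono ρ := fun a b hab => hf.lt_iff_lt.mp (hρ hab)
  have h1 : h.orderIsoOfSurjective ρ ρ.surjective = OrderIso.refl _ := Subsingleton.elim _ _
  ext i
  exact congrArg Fin.val (DFunLike.congr_fun h1 i)

lemma diagAct_tprod_single (U : Type) [AddCommGroup U] [Module ℂ U] (k n : ℕ)
    (τ : Equiv.Perm (Fin k)) (w : Fin k → U) (g : Fin k ↪ Fin n) :
    diagAct U k n τ (PiTensorProduct.tprod ℂ w ⊗ₜ[ℂ] Finsupp.single g 1) =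
      PiTensorProduct.tprod ℂ (fun i => w (τ⁻¹ i)) ⊗ₜ[ℂ]
        Finsupp.single ((τ⁻¹ : Equiv.Perm (Fin k)).toEmbedding.trans g) 1 := by
  simp only [diagAct, permTP, kActInj, TensorProduct.map_tmul, LinearEquiv.coe_coe,
    Finsupp.lmapDomain_apply, Finsupp.mapDomain_single]
  rw [PiTensorProduct.reindex_tprod]
  rfl

open Classical in
lemma resStar_single (n k : ℕ) (l : Fin (k + 1)) (f : Fin k ↪ Fin n) :
    resStar n k l (Finsupp.single f 1) =
      ∑ g : Fin (k + 1) ↪ Fin n with (Fin.succAboveEmb l).trans g = f, Finsupp.single g 1 := by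
  simp only [resStar, Finsupp.lsum_single, LinearMap.toSpanSingleton_apply, one_smul]
  congr!

/-- Averaging identity used to show the complex tensor power interpolates the classical one:
for `0 ≤ k ≤ n − 1`, `J = {j₁ < ⋯ < j_k} ⊆ {1,…,n}` with associated injection `f_J : i ↦ j_i`,
`u, v_{j₁}, …, v_{j_k} ∈ U`, one has in `U^{⊗(k+1)} ⊗ ℂ[Inj_{k+1}^n]`:
`e_{S_{k+1}}( Σ_{l=1}^{k+1} Σ_{g strictly increasing, g∘ι_l = f_J} u^{(l)}(v_{j₁}⊗⋯⊗v_{j_k}) ⊗ g )`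
`= (1/(k+1)!) Σ_{l=1}^{k+1} Σ_{σ ∈ S_k} (u^{(l)} ∘ P_σ)(v_{j₁}⊗⋯⊗v_{j_k}) ⊗ res_l^*(f_J ∘ σ⁻¹)`. -/
theorem averaging_insertion (U : Type) [AddCommGroup U] [Module ℂ U]
    (n k : ℕ) (hk : k < n) (fJ : Fin k ↪ Fin n) (hfJ : StrictMono fJ)
    (u : U) (v : Fin k → U) :
    letI : DecidableEq (Fin k ↪ Fin n) := Classical.decEq _
    letI : ∀ (g : Fin (k + 1) ↪ Fin n), Decidable (StrictMono g) := fun _ => Classical.dec _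
    (((k + 1).factorial : ℂ))⁻¹ •
        ∑ τ : Equiv.Perm (Fin (k + 1)), diagAct U (k + 1) n τ
          (∑ l : Fin (k + 1),
            ∑ g ∈ Finset.univ.filter
              (fun g : Fin (k + 1) ↪ Fin n =>
                StrictMono ⇑g ∧ (Fin.succAboveEmb l).trans g = fJ),
              (PiTensorProduct.tprod ℂ (l.insertNth u v)) ⊗ₜ[ℂ] Finsupp.single g 1)
      = (((k + 1).factorial : ℂ))⁻¹ •
          ∑ l : Fin (k + 1), ∑ σ : Equiv.Perm (Fin k),
            (PiTensorProduct.tprod ℂ (l.insertNth u (fun i => v (σ⁻¹ i)))) ⊗ₜ[ℂ]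
              resStar n k l
                (Finsupp.single ((σ⁻¹ : Equiv.Perm (Fin k)).toEmbedding.trans fJ) 1) := by
  congr 1
  simp only [map_sum, diagAct_tprod_single, resStar_single, TensorProduct.tmul_sum,
    Finset.sum_sigma']
  refine Finset.sum_bij
    (fun x _ => ⟨x.1 x.2.1, permDelete x.1 x.2.1, x.1⁻¹.toEmbedding.trans x.2.2⟩) ?_ ?_ ?_ ?_
  · rintro ⟨τ, l, g⟩ hx
    simp only [Finset.mem_sigma, Finset.mem_univ, Finset.mem_filter, true_and] at hx ⊢
    obtain ⟨-, rfl⟩ := hx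
    ext j
    obtain ⟨i, rfl⟩ := (permDelete τ l).surjective j
    simp [succAbove_permDelete]
  · rintro ⟨τ, l, g⟩ hx ⟨τ', l', g'⟩ hx' h
    simp only [Finset.mem_sigma, Finset.mem_univ, Finset.mem_filter, true_and] at hx hx'
    simp only [Sigma.mk.injEq, heq_eq_eq] at h
    obtain ⟨hl, -, hg⟩ := h
    have hcomp : ∀ i, g ((τ⁻¹ * τ') i) = g' i := fun i => by
      simpa using DFunLike.congr_fun hg (τ' i)
    have hρ : τ⁻¹ * τ' = 1 := perm_eq_one_of_strictMono_comp hx.1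
      (show StrictMono (fun i => g ((τ⁻¹ * τ') i)) by simpa only [hcomp] using hx'.1)
    obtain rfl : τ = τ' := inv_mul_eq_one.mp hρ
    obtain rfl : l = l' := τ.injective hl
    obtain rfl : g = g' := by
      ext i
      simpa using congrArg Fin.val (hcomp i)
    rfl
  · rintro ⟨m, σ, h⟩ hx
    simp only [Finset.mem_sigma, Finset.mem_univ, Finset.mem_filter, true_and] at hx
    obtain ⟨τ, hτ⟩ : ∃ τ : Equiv.Perm (Fin (k + 1)), StrictMono (h ∘ τ) :=
      ⟨Tuple.sort h, (Tuple.monotone_sort h).strictMono_of_injective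
        (h.injective.comp (Equiv.injective _))⟩
    obtain ⟨l, rfl⟩ := τ.surjective m
    have hcomp : ∀ i, h (τ (l.succAbove i)) = fJ ((σ⁻¹ * permDelete τ l) i) := fun i => by
      rw [← succAbove_permDelete]
      exact DFunLike.congr_fun hx (permDelete τ l i)
    have hσ : σ⁻¹ * permDelete τ l = 1 := perm_eq_one_of_strictMono_comp hfJ (by
      intro a b hab
      simp only [Function.comp_apply, ← hcomp]
      exact hτ (l.strictMono_succAbove hab))
    refine ⟨⟨τ, l, τ.toEmbedding.trans h⟩, ?_, ?_⟩
    · simp only [Finset.mem_sigma, Finset.mem_univ, Finset.mem_filter, true_and]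
      refine ⟨hτ, ?_⟩
      ext i
      simpa [hσ] using congrArg Fin.val (hcomp i)
    · obtain rfl : σ = permDelete τ l := inv_mul_eq_one.mp hσ
      have hh : (τ⁻¹).toEmbedding.trans (τ.toEmbedding.trans h) = h := by
        ext i
        simp
      simp only [hh]
  · rintro ⟨τ, l, g⟩ -
    congr 2
    exact funext fun j => (insertNth_permDelete τ l u v j).symm
end
end

section
/- Let U be a complex vector space, n ∈ ℕ, 0 ≤ k ≤ n−1, and J = {j_1 < j_2 < ⋯ < j_{k+1}} ⊆ {1,…,n}; let f_J ∈ Inj_{k+1}^n be the map i ↦ j_i. Let λ ∈ U* and v_{j_1}, …, v_{j_{k+1}} ∈ U. Then in U^{⊗k} ⊗ ℂ[Inj_k^n]: e_{S_k}( Σ_{l=1}^{k+1} λ^{(l)}(v_{j_1}⊗⋯⊗v_{j_{k+1}}) ⊗ res_l(f_J) ) = (1/(k+1)!) Σ_{l=1}^{k+1} Σ_{σ ∈ S_{k+1}} (λ^{(l)} ∘ P_σ)(v_{j_1}⊗⋯⊗v_{j_{k+1}}) ⊗ res_l(f_J ∘ σ⁻¹). -/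
open scoped TensorProduct

noncomputable section

/-- `res_l : ℂ[Inj_{k+1}^n] → ℂ[Inj_k^n]`, defined on basis elements by `g ↦ g ∘ ι_l`, where
`ι_l` is the order-preserving injection `{1,…,k} → {1,…,k+1}` omitting `l`. -/
def resMap (n k : ℕ) (l : Fin (k + 1)) : InjSp (k + 1) n →ₗ[ℂ] InjSp k n :=
  Finsupp.lmapDomain ℂ ℂ (fun g : Fin (k + 1) ↪ Fin n => (Fin.succAboveEmb l).trans g)

/-- The permutation of `Fin (k + 1)` that sends `l` to `m` and `l.succAbove i` to
`m.succAbove (τ i)`. -/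
def extendPerm {k : ℕ} (l m : Fin (k + 1)) (τ : Equiv.Perm (Fin k)) : Equiv.Perm (Fin (k + 1)) :=
  (finSuccEquiv' l).trans (τ.optionCongr.trans (finSuccEquiv' m).symm)

theorem extendPerm_self {k : ℕ} (l m : Fin (k + 1)) (τ : Equiv.Perm (Fin k)) :
    extendPerm l m τ l = m := by
  simp [extendPerm]

theorem extendPerm_succAbove {k : ℕ} (l m : Fin (k + 1)) (τ : Equiv.Perm (Fin k)) (i : Fin k) :
    extendPerm l m τ (l.succAbove i) = m.succAbove (τ i) := by
  simp [extendPerm]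

theorem extendPerm_bijective {k : ℕ} (l : Fin (k + 1)) :
    Function.Bijective
      (fun p : Fin (k + 1) × Equiv.Perm (Fin k) => extendPerm l p.1 p.2) := by
  rw [Fintype.bijective_iff_injective_and_card]
  refine ⟨?_, by simp [Fintype.card_perm, Nat.factorial_succ]⟩
  rintro ⟨m, τ⟩ ⟨m', τ'⟩ h
  have hm : m = m' := by
    simpa only [extendPerm_self] using DFunLike.congr_fun h l
  subst hm
  refine Prod.ext rfl (Equiv.ext fun i => ?_)
  simpa only [extendPerm_succAbove, Fin.succAbove_right_inj] using
    DFunLike.congr_fun h (l.succAbove i)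

/-- Summing over `S_{k+1}` is the same as summing over the preimage `m = σ⁻¹ l` and over `S_k`. -/
theorem sum_perm_inv_eq_sum_extendPerm {k : ℕ} {M : Type*} [AddCommMonoid M] (l : Fin (k + 1))
    (F : Equiv.Perm (Fin (k + 1)) → M) :
    ∑ σ, F σ⁻¹ = ∑ τ : Equiv.Perm (Fin k), ∑ m, F (extendPerm l m τ⁻¹) := by
  rw [Finset.sum_comm, show ∑ σ, F σ⁻¹ = ∑ σ, F σ from Equiv.sum_comp (Equiv.inv _) F,
    ← (extendPerm_bijective l).sum_comp F, Fintype.sum_prod_type]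
  exact Finset.sum_congr rfl fun m _ =>
    (Equiv.sum_comp (Equiv.inv _) fun τ => F (extendPerm l m τ)).symm

theorem diagAct_tprod_tmul_single (U : Type) [AddCommGroup U] [Module ℂ U] (k n : ℕ)
    (τ : Equiv.Perm (Fin k)) (w : Fin k → U) (f : Fin k ↪ Fin n) :
    diagAct U k n τ (PiTensorProduct.tprod ℂ w ⊗ₜ[ℂ] Finsupp.single f 1) =
      PiTensorProduct.tprod ℂ (fun i => w (τ⁻¹ i)) ⊗ₜ[ℂ]
        Finsupp.single ((τ⁻¹ : Equiv.Perm (Fin k)).toEmbedding.trans f) 1 := by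
  simp only [diagAct, permTP, kActInj, TensorProduct.map_tmul, LinearEquiv.coe_coe,
    Finsupp.lmapDomain_apply, Finsupp.mapDomain_single]
  congr 1
  exact PiTensorProduct.reindex_tprod τ w

theorem resMap_single (n k : ℕ) (l : Fin (k + 1)) (g : Fin (k + 1) ↪ Fin n) :
    resMap n k l (Finsupp.single g 1) =
      Finsupp.single ((Fin.succAboveEmb l).trans g) 1 := by
  simp [resMap]

/-- Averaging identity for contractions: for `0 ≤ k ≤ n − 1`,
`J = {j₁ < ⋯ < j_{k+1}} ⊆ {1,…,n}` with associated injection `f_J : i ↦ j_i`, `λ ∈ U*` and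
`v_{j₁}, …, v_{j_{k+1}} ∈ U`, one has in `U^{⊗k} ⊗ ℂ[Inj_k^n]`:
`e_{S_k}( Σ_{l=1}^{k+1} λ^{(l)}(v_{j₁}⊗⋯⊗v_{j_{k+1}}) ⊗ res_l(f_J) )`
`= (1/(k+1)!) Σ_{l=1}^{k+1} Σ_{σ ∈ S_{k+1}} (λ^{(l)} ∘ P_σ)(v_{j₁}⊗⋯⊗v_{j_{k+1}}) ⊗ res_l(f_J ∘ σ⁻¹)`,
where `λ^{(l)}` is the contraction `w₁⊗⋯⊗w_{k+1} ↦ λ(w_l)·w₁⊗⋯⊗w_{l−1}⊗w_{l+1}⊗⋯⊗w_{k+1}`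
(written out on the pure tensors to which it is applied). -/
theorem averaging_contraction (U : Type) [AddCommGroup U] [Module ℂ U]
    (n k : ℕ) (hk : k < n) (fJ : Fin (k + 1) ↪ Fin n) (hfJ : StrictMono fJ)
    (lam : U →ₗ[ℂ] ℂ) (v : Fin (k + 1) → U) :
    ((k.factorial : ℂ))⁻¹ •
        ∑ τ : Equiv.Perm (Fin k), diagAct U k n τ
          (∑ l : Fin (k + 1),
            lam (v l) •
              ((PiTensorProduct.tprod ℂ (fun i : Fin k => v (l.succAbove i))) ⊗ₜ[ℂ]
                resMap n k l (Finsupp.single fJ 1)))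
      = (((k + 1).factorial : ℂ))⁻¹ •
          ∑ l : Fin (k + 1), ∑ σ : Equiv.Perm (Fin (k + 1)),
            lam (v (σ⁻¹ l)) •
              ((PiTensorProduct.tprod ℂ (fun i : Fin k => v (σ⁻¹ (l.succAbove i)))) ⊗ₜ[ℂ]
                resMap n k l
                  (Finsupp.single
                    ((σ⁻¹ : Equiv.Perm (Fin (k + 1))).toEmbedding.trans fJ) 1)) := by
  have hsum : ∀ l : Fin (k + 1), (∑ σ : Equiv.Perm (Fin (k + 1)),
      lam (v (σ⁻¹ l)) •
        ((PiTensorProduct.tprod ℂ (fun i : Fin k => v (σ⁻¹ (l.succAbove i)))) ⊗ₜ[ℂ]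
          resMap n k l
            (Finsupp.single ((σ⁻¹ : Equiv.Perm (Fin (k + 1))).toEmbedding.trans fJ) 1))) =
      ∑ τ : Equiv.Perm (Fin k), diagAct U k n τ
        (∑ m : Fin (k + 1),
          lam (v m) •
            ((PiTensorProduct.tprod ℂ (fun i : Fin k => v (m.succAbove i))) ⊗ₜ[ℂ]
              resMap n k m (Finsupp.single fJ 1))) := by
    intro l
    rw [sum_perm_inv_eq_sum_extendPerm l (fun ρ : Equiv.Perm (Fin (k + 1)) =>
      lam (v (ρ l)) •
        ((PiTensorProduct.tprod ℂ (fun i : Fin k => v (ρ (l.succAbove i)))) ⊗ₜ[ℂ]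
          resMap n k l (Finsupp.single (ρ.toEmbedding.trans fJ) 1)))]
    refine Finset.sum_congr rfl fun τ _ => ?_
    rw [map_sum]
    refine Finset.sum_congr rfl fun m _ => ?_
    have hemb : (Fin.succAboveEmb l).trans ((extendPerm l m τ⁻¹).toEmbedding.trans fJ) =
        (τ⁻¹ : Equiv.Perm (Fin k)).toEmbedding.trans ((Fin.succAboveEmb m).trans fJ) :=
      Function.Embedding.ext fun i => congrArg fJ (extendPerm_succAbove l m τ⁻¹ i)
    simp only [map_smul, resMap_single, diagAct_tprod_tmul_single, extendPerm_self,
      extendPerm_succAbove, hemb]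
  simp only [hsum, Finset.sum_const, Finset.card_univ, Fintype.card_fin]
  rw [← Nat.cast_smul_eq_nsmul ℂ, smul_smul]
  congr 1
  rw [Nat.factorial_succ, Nat.cast_mul, mul_inv_rev, mul_assoc,
    inv_mul_cancel₀ (Nat.cast_ne_zero.mpr k.succ_ne_zero), mul_one]
end
end
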